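/- Let b(x,s) ∈ K[x,s] be nonzero and f ∈ K[x]. There exists Q ∈ D_X[s] satisfying Q f^{s+1} = b(x,s) f^s in N_f if and only if b(x,σ) ∈ I_f + V^1 D_Y, where σ = -∂_t t. In particular, the global Bernstein–Sato polynomial b_f generates the ideal (in_{(-w,w)} I_f) ∩ K[σ], where w = (0,...,0,1) and in_{(-w,w)} denotes the initial ideal with respect to the weight vector (-w,w). -/

import Mathlib

/-!
STATEMENT 16: Let `b(x,s) ∈ K[x,s]` be nonzero and `f ∈ K[x]`.  There exists
`Q ∈ D_X[s]` with `Q f^{s+1} = b(x,s) fˢ` in `N_f` if and only if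
`b(x,σ) ∈ I_f + V¹ D_Y`, where `σ = -∂ₜ t`,
`I_f = D_Y·⟨t - f, ∂_{xᵢ} + (∂f/∂xᵢ)∂ₜ⟩` and `V¹D_Y` is the degree-`≥1` part
of the V-filtration of `D_Y` along `t = 0`.

Since the Weyl algebra `D_Y` is simple in characteristic zero, it is realized
faithfully by its action on the nonzero module `N_f`; we therefore work with
the images of all operators in `End_K(N_f)`, where `N_f = K[x][f⁻¹,s] fˢ`
is modeled as `S[s]`, `S = K[x][f⁻¹]`.  `K[x,s]` is modeled as
`(K[x])[s] = Polynomial (MvPolynomial (Fin n) K)`.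
-/

open Polynomial

/-!
`I_f` is the annihilator of `f^s` in `D_Y`.  Indeed, modulo `I_f` every operator has a
representative in `K[x][∂ₜ]`, and such an operator is determined by its value on `f^s`, because
`∂ₜ^k f^s = (-1/f)^k s(s-1)⋯(s-k+1) f^s` has degree `k` in `s` with an invertible leading
coefficient.  As `σ` acts as multiplication by `s` and `t f^s = f^{s+1}`, the theorem compares
`D_X[s] t` with `V¹`.  If `Q f^{s+1} = b(x,s) f^s`, then `b(x,σ) - Q t` kills `f^s`, and
`Q t ∈ V¹`.  Conversely `t^{d+ν+1} ∂ₜ^ν ∈ D_X[s] t^{d+1}`, and `t^{d+1} f^s = f^d f^{s+1}`, so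
every `w ∈ V¹` satisfies `w f^s = Q f^{s+1}` for some `Q ∈ D_X[s]`.
-/

theorem lie_mem_adjoin_of_forall_mem {K A : Type*} [CommRing K] [Ring A] [Algebra K A]
    {s : Set A} {a b : A} (hs : ∀ g ∈ s, ⁅a, g⁆ ∈ Algebra.adjoin K s)
    (hb : b ∈ Algebra.adjoin K s) : ⁅a, b⁆ ∈ Algebra.adjoin K s := by
  induction hb using Algebra.adjoin_induction with
  | mem g hg => exact hs g hg
  | algebraMap c =>
    rw [commute_iff_lie_eq.1 (Algebra.commute_algebraMap_right c a)]
    exact zero_mem _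
  | add b c _ _ hb hc =>
    have additive : ⁅a, b + c⁆ = ⁅a, b⁆ + ⁅a, c⁆ := by
      simp only [Ring.lie_def]; noncomm_ring
    exact additive ▸ add_mem hb hc
  | mul b c hb' hc' hb hc =>
    have leibniz : ⁅a, b * c⁆ = ⁅a, b⁆ * c + b * ⁅a, c⁆ := by
      simp only [Ring.lie_def]; noncomm_ring
    exact leibniz ▸ add_mem (mul_mem hb hc') (mul_mem hb' hc)

theorem mul_mem_of_mem_adjoin {K A : Type*} [CommRing K] [Ring A] [Algebra K A]
    {s : Set A} {M : Submodule K A} (hs : ∀ g ∈ s, ∀ w ∈ M, g * w ∈ M) {a : A}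
    (ha : a ∈ Algebra.adjoin K s) : ∀ w ∈ M, a * w ∈ M := by
  induction ha using Algebra.adjoin_induction with
  | mem g hg => exact hs g hg
  | algebraMap c => exact fun w hw => Algebra.smul_def c w ▸ M.smul_mem c hw
  | add a b _ _ ha hb => exact fun w hw => add_mul a b w ▸ add_mem (ha w hw) (hb w hw)
  | mul a b _ _ ha hb => exact fun w hw => mul_assoc a b w ▸ ha _ (hb w hw)

theorem mul_mem_span_of_forall_mem {K A : Type*} [CommRing K] [Ring A] [Algebra K A]
    {u : Set A} {a : A} (hu : ∀ w ∈ u, a * w ∈ Submodule.span K u) :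
    ∀ w ∈ Submodule.span K u, a * w ∈ Submodule.span K u :=
  Submodule.span_le (p := (Submodule.span K u).comap (LinearMap.mulLeft K a)) |>.2 hu

theorem mul_pow_succ_of_mul_eq_mul_add_one {A : Type*} [Ring A] {a b : A}
    (hab : a * b = b * a + 1) (k : ℕ) :
    a * b ^ (k + 1) = b ^ (k + 1) * a + (k + 1) • b ^ k := by
  induction k with
  | zero => simp [hab]
  | succ k ih =>
    rw [pow_succ b (k + 1), ← mul_assoc, ih, add_mul, mul_assoc, hab, mul_add, mul_one,
      smul_mul_assoc, ← pow_succ, add_assoc, ← succ_nsmul', mul_assoc]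

section Operators

variable {K A ι : Type*} [CommRing K] [Ring A] [Algebra K A]

variable (K) in
/-- The algebra `D_X` of differential operators in `x`, generated by the coordinates `x i` and the
partial derivatives `dx i`, as a subalgebra of an ambient algebra `A` of operators. -/
def diffOpX (x dx : ι → A) : Subalgebra K A :=
  Algebra.adjoin K {P | ∃ i, P = x i ∨ P = dx i}

variable (K) in
/-- The algebra `D_X[s]`, where `s` is encoded as the operator `σ = -∂ₜ t`. -/
def diffOpXs (x dx : ι → A) (t dt : A) : Subalgebra K A :=
  Algebra.adjoin K ({P | ∃ i, P = x i ∨ P = dx i} ∪ {-(dt * t)})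

variable (K) in
/-- The algebra `D_Y` of differential operators in `x` and `t`. -/
def diffOpY (x dx : ι → A) (t dt : A) : Subalgebra K A :=
  Algebra.adjoin K ({P | ∃ i, P = x i ∨ P = dx i} ∪ {t, dt})

variable (K) in
/-- The Malgrange ideal `I_f`, the left ideal of `D_Y` generated by `t - f` and the
`∂ᵢ + (∂f/∂xᵢ) ∂ₜ`, as a `K`-submodule.  The operators `φ` and `dφ i` stand for multiplication by
`f` and by `∂f/∂xᵢ`. -/
def malgrangeIdeal (x dx : ι → A) (t dt φ : A) (dφ : ι → A) : Submodule K A :=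
  Submodule.span K {w | ∃ P ∈ diffOpY K x dx t dt,
    w = P * (t - φ) ∨ ∃ i, w = P * (dx i + dφ i * dt)}

variable (K) in
/-- The step `V¹ D_Y` of the V-filtration along `t = 0`, spanned by the `P t^μ ∂ₜ^ν` with
`P ∈ D_X` and `μ - ν ≥ 1`. -/
def vFiltrationOne (x dx : ι → A) (t dt : A) : Submodule K A :=
  Submodule.span K {w | ∃ P ∈ diffOpX K x dx,
    ∃ μ ν : ℕ, (μ : ℤ) - (ν : ℤ) ≥ 1 ∧ w = P * t ^ μ * dt ^ ν}

variable (K) in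
/-- The algebra `K[x][∂ₜ]`, which contains a representative of every class of `D_Y / I_f`. -/
def coeffOpDt (x : ι → A) (dt : A) : Subalgebra K A :=
  Algebra.adjoin K (Set.range x ∪ {dt})

variable (K) in
/-- The commutation relations of the Weyl algebra `D_Y` between the coordinates `x`, `t` and the
derivatives `dx`, `dt`, in the weak form that `[∂ᵢ, xⱼ]` is only required to be a polynomial
in `x`. -/
structure WeylRelations (x dx : ι → A) (t dt : A) : Prop where
  dt_mul_t : dt * t = t * dt + 1
  commute_t_x : ∀ i, Commute t (x i)
  commute_dt_x : ∀ i, Commute dt (x i)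
  commute_t_dx : ∀ i, Commute t (dx i)
  commute_dt_dx : ∀ i, Commute dt (dx i)
  lie_dx_x_mem : ∀ i j, ⁅dx i, x j⁆ ∈ Algebra.adjoin K (Set.range x)

variable {x dx : ι → A} {t dt φ : A} {dφ : ι → A}

theorem adjoin_range_le_diffOpX : Algebra.adjoin K (Set.range x) ≤ diffOpX K x dx :=
  Algebra.adjoin_mono (Set.range_subset_iff.2 fun i => ⟨i, Or.inl rfl⟩)

theorem diffOpX_le_diffOpXs : diffOpX K x dx ≤ diffOpXs K x dx t dt :=
  Algebra.adjoin_mono Set.subset_union_left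

theorem diffOpX_le_diffOpY : diffOpX K x dx ≤ diffOpY K x dx t dt :=
  Algebra.adjoin_mono Set.subset_union_left

theorem t_mem_diffOpY : t ∈ diffOpY K x dx t dt :=
  Algebra.subset_adjoin (by simp)

theorem dt_mem_diffOpY : dt ∈ diffOpY K x dx t dt :=
  Algebra.subset_adjoin (by simp)

theorem dt_mul_t_mem_diffOpXs : dt * t ∈ diffOpXs K x dx t dt :=
  neg_mem_iff.1 (Algebra.subset_adjoin (by simp))

theorem diffOpXs_le_diffOpY : diffOpXs K x dx t dt ≤ diffOpY K x dx t dt :=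
  Algebra.adjoin_le <| Set.union_subset
    (Set.subset_union_left.trans Algebra.subset_adjoin)
    (Set.singleton_subset_iff.2 (neg_mem (mul_mem dt_mem_diffOpY t_mem_diffOpY)))

theorem adjoin_range_le_coeffOpDt : Algebra.adjoin K (Set.range x) ≤ coeffOpDt K x dt :=
  Algebra.adjoin_mono Set.subset_union_left

theorem dt_mem_coeffOpDt : dt ∈ coeffOpDt K x dt :=
  Algebra.subset_adjoin (by simp)

theorem coeffOpDt_le_diffOpY : coeffOpDt K x dt ≤ diffOpY K x dx t dt :=
  Algebra.adjoin_mono <| Set.union_subset_union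
    (Set.range_subset_iff.2 fun i => ⟨i, Or.inl rfl⟩) (by simp)

theorem mul_mem_malgrangeIdeal {Q : A} (hQ : Q ∈ diffOpY K x dx t dt) :
    ∀ w ∈ malgrangeIdeal K x dx t dt φ dφ, Q * w ∈ malgrangeIdeal K x dx t dt φ dφ := by
  refine mul_mem_span_of_forall_mem ?_
  rintro w ⟨P, hP, hw⟩
  refine Submodule.subset_span ⟨Q * P, mul_mem hQ hP, ?_⟩
  rcases hw with rfl | ⟨i, rfl⟩
  · exact Or.inl (mul_assoc ..).symm
  · exact Or.inr ⟨i, (mul_assoc ..).symm⟩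

namespace WeylRelations

theorem commute_t_of_mem_diffOpX (h : WeylRelations K x dx t dt) {P : A}
    (hP : P ∈ diffOpX K x dx) : Commute t P := by
  refine Algebra.commute_of_mem_adjoin_of_forall_mem_commute hP ?_
  rintro _ ⟨i, rfl | rfl⟩
  exacts [h.commute_t_x i, h.commute_t_dx i]

theorem commute_dt_of_mem_diffOpX (h : WeylRelations K x dx t dt) {P : A}
    (hP : P ∈ diffOpX K x dx) : Commute dt P := by
  refine Algebra.commute_of_mem_adjoin_of_forall_mem_commute hP ?_
  rintro _ ⟨i, rfl | rfl⟩
  exacts [h.commute_dt_x i, h.commute_dt_dx i]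

theorem lie_t_mem_coeffOpDt (h : WeylRelations K x dx t dt) {w : A} (hw : w ∈ coeffOpDt K x dt) :
    ⁅t, w⁆ ∈ coeffOpDt K x dt := by
  refine lie_mem_adjoin_of_forall_mem ?_ hw
  rintro _ (⟨i, rfl⟩ | rfl)
  · rw [commute_iff_lie_eq.1 (h.commute_t_x i)]
    exact zero_mem _
  · rw [Ring.lie_def, h.dt_mul_t, sub_add_cancel_left]
    exact neg_mem (one_mem _)

theorem lie_dx_mem_coeffOpDt (h : WeylRelations K x dx t dt) (i : ι) {w : A}
    (hw : w ∈ coeffOpDt K x dt) : ⁅dx i, w⁆ ∈ coeffOpDt K x dt := by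
  refine lie_mem_adjoin_of_forall_mem ?_ hw
  rintro _ (⟨j, rfl⟩ | rfl)
  · exact adjoin_range_le_coeffOpDt (h.lie_dx_x_mem i j)
  · rw [commute_iff_lie_eq.1 (h.commute_dt_dx i).symm]
    exact zero_mem _

/- Modulo `I_f`, right multiplication by `t` is right multiplication by `f` and right
multiplication by `∂ᵢ` is right multiplication by `-(∂ᵢf)∂ₜ`, while commutators with `t` and `∂ᵢ`
preserve `K[x][∂ₜ]`. -/
theorem generator_mul_mem_malgrangeIdeal_sup_coeffOpDt (h : WeylRelations K x dx t dt)
    (hφ : φ ∈ Algebra.adjoin K (Set.range x)) (hdφ : ∀ i, dφ i ∈ Algebra.adjoin K (Set.range x))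
    {a w : A} (ha : a ∈ {P | ∃ i, P = x i ∨ P = dx i} ∪ {t, dt}) (hw : w ∈ coeffOpDt K x dt) :
    a * w ∈ malgrangeIdeal K x dx t dt φ dφ ⊔ Subalgebra.toSubmodule (coeffOpDt K x dt) := by
  have hwY : w ∈ diffOpY K x dx t dt := coeffOpDt_le_diffOpY hw
  rcases ha with ⟨i, rfl | rfl⟩ | rfl | rfl
  · have hx : x i ∈ coeffOpDt K x dt := Algebra.subset_adjoin (Or.inl ⟨i, rfl⟩)
    exact Submodule.mem_sup_right (Subalgebra.mul_mem _ hx hw)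
  · have split : dx i * w = w * (dx i + dφ i * dt) + (⁅dx i, w⁆ - w * (dφ i * dt)) := by
      rw [Ring.lie_def]; noncomm_ring
    have hdφdt : dφ i * dt ∈ coeffOpDt K x dt :=
      mul_mem (adjoin_range_le_coeffOpDt (hdφ i)) dt_mem_coeffOpDt
    rw [split]
    exact Submodule.add_mem_sup (Submodule.subset_span ⟨w, hwY, Or.inr ⟨i, rfl⟩⟩)
      (Subalgebra.sub_mem _ (h.lie_dx_mem_coeffOpDt i hw) (Subalgebra.mul_mem _ hw hdφdt))
  · have split : a * w = w * (a - φ) + (⁅a, w⁆ + w * φ) := by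
      rw [Ring.lie_def]; noncomm_ring
    rw [split]
    exact Submodule.add_mem_sup (Submodule.subset_span ⟨w, hwY, Or.inl rfl⟩)
      (Subalgebra.add_mem _ (h.lie_t_mem_coeffOpDt hw)
        (Subalgebra.mul_mem _ hw (adjoin_range_le_coeffOpDt hφ)))
  · exact Submodule.mem_sup_right (Subalgebra.mul_mem _ dt_mem_coeffOpDt hw)

theorem mem_malgrangeIdeal_sup_coeffOpDt (h : WeylRelations K x dx t dt)
    (hφ : φ ∈ Algebra.adjoin K (Set.range x)) (hdφ : ∀ i, dφ i ∈ Algebra.adjoin K (Set.range x))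
    {P : A} (hP : P ∈ diffOpY K x dx t dt) :
    P ∈ malgrangeIdeal K x dx t dt φ dφ ⊔ Subalgebra.toSubmodule (coeffOpDt K x dt) := by
  set M := malgrangeIdeal K x dx t dt φ dφ ⊔ Subalgebra.toSubmodule (coeffOpDt K x dt)
  have stable : ∀ w ∈ M, P * w ∈ M := by
    refine mul_mem_of_mem_adjoin ?_ hP
    intro a ha w hw
    obtain ⟨u, hu, n, hn, rfl⟩ := Submodule.mem_sup.1 hw
    rw [mul_add]
    exact add_mem
      (Submodule.mem_sup_left (mul_mem_malgrangeIdeal (Algebra.subset_adjoin ha) u hu))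
      (h.generator_mul_mem_malgrangeIdeal_sup_coeffOpDt hφ hdφ ha hn)
  simpa only [mul_one] using stable 1 (Submodule.mem_sup_right (one_mem (coeffOpDt K x dt)))

theorem neg_dt_mul_t_mul (h : WeylRelations K x dx t dt) {P : A} (hP : P ∈ diffOpX K x dx)
    (μ ν : ℕ) : -(dt * t) * (P * t ^ μ * dt ^ ν)
      = -(P * t ^ (μ + 1) * dt ^ (ν + 1)) - (μ + 1) • (P * t ^ μ * dt ^ ν) := by
  calc -(dt * t) * (P * t ^ μ * dt ^ ν)
      = -(dt * (t * P) * t ^ μ * dt ^ ν) := by noncomm_ring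
    _ = -(dt * P * t ^ (μ + 1) * dt ^ ν) := by
      rw [(h.commute_t_of_mem_diffOpX hP).eq, pow_succ']; noncomm_ring
    _ = -(P * (dt * t ^ (μ + 1)) * dt ^ ν) := by
      rw [(h.commute_dt_of_mem_diffOpX hP).eq]; noncomm_ring
    _ = -(P * (t ^ (μ + 1) * dt + (μ + 1) • t ^ μ) * dt ^ ν) := by
      rw [mul_pow_succ_of_mul_eq_mul_add_one h.dt_mul_t]
    _ = _ := by
      rw [pow_succ' dt, mul_add, add_mul, mul_smul_comm, smul_mul_assoc, neg_add']
      simp only [mul_assoc]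

theorem mul_t_mem_vFiltrationOne (h : WeylRelations K x dx t dt) {Q : A}
    (hQ : Q ∈ diffOpXs K x dx t dt) : Q * t ∈ vFiltrationOne K x dx t dt := by
  refine mul_mem_of_mem_adjoin ?_ hQ t
    (Submodule.subset_span ⟨1, one_mem _, 1, 0, by simp, by simp⟩)
  intro g hg
  refine mul_mem_span_of_forall_mem ?_
  rintro _ ⟨P, hP, μ, ν, hμν, rfl⟩
  have hmem : P * t ^ μ * dt ^ ν ∈ vFiltrationOne K x dx t dt :=
    Submodule.subset_span ⟨P, hP, μ, ν, hμν, rfl⟩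
  rcases hg with hg | rfl
  · exact Submodule.subset_span ⟨g * P, mul_mem (Algebra.subset_adjoin hg) hP, μ, ν, hμν, by
      simp only [mul_assoc]⟩
  · have hmem_succ : P * t ^ (μ + 1) * dt ^ (ν + 1) ∈ vFiltrationOne K x dx t dt :=
      Submodule.subset_span ⟨P, hP, μ + 1, ν + 1, by push_cast; linarith, rfl⟩
    rw [h.neg_dt_mul_t_mul hP]
    exact sub_mem (neg_mem hmem_succ) (nsmul_mem hmem _)

theorem exists_t_mul_eq_mul_t (h : WeylRelations K x dx t dt) {Q : A}
    (hQ : Q ∈ diffOpXs K x dx t dt) : ∃ Q' ∈ diffOpXs K x dx t dt, t * Q = Q' * t := by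
  induction hQ using Algebra.adjoin_induction with
  | mem g hg =>
    rcases hg with hg | rfl
    · have hgX : g ∈ diffOpX K x dx := Algebra.subset_adjoin hg
      exact ⟨g, diffOpX_le_diffOpXs hgX, h.commute_t_of_mem_diffOpX hgX⟩
    · refine ⟨-(dt * t) + 1, add_mem (neg_mem dt_mul_t_mem_diffOpXs) (one_mem _), ?_⟩
      have t_mul_dt : t * dt = dt * t - 1 := eq_sub_of_add_eq h.dt_mul_t.symm
      rw [mul_neg, ← mul_assoc, t_mul_dt]
      noncomm_ring
  | algebraMap c =>
    exact ⟨algebraMap K A c, Subalgebra.algebraMap_mem _ c, (Algebra.commutes c t).symm⟩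
  | add P Q _ _ hP hQ =>
    obtain ⟨P', hP', hPt⟩ := hP
    obtain ⟨Q', hQ', hQt⟩ := hQ
    exact ⟨P' + Q', add_mem hP' hQ', by rw [mul_add, hPt, hQt, add_mul]⟩
  | mul P Q _ _ hP hQ =>
    obtain ⟨P', hP', hPt⟩ := hP
    obtain ⟨Q', hQ', hQt⟩ := hQ
    exact ⟨P' * Q', mul_mem hP' hQ', by rw [← mul_assoc, hPt, mul_assoc, hQt, mul_assoc]⟩

theorem exists_t_pow_mul_eq_mul_t_pow (h : WeylRelations K x dx t dt) {Q : A}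
    (hQ : Q ∈ diffOpXs K x dx t dt) (d : ℕ) :
    ∃ Q' ∈ diffOpXs K x dx t dt, t ^ d * Q = Q' * t ^ d := by
  induction d with
  | zero => exact ⟨Q, hQ, by simp⟩
  | succ d ih =>
    obtain ⟨P, hP, hPd⟩ := ih
    obtain ⟨P', hP', hPt⟩ := h.exists_t_mul_eq_mul_t hP
    exact ⟨P', hP', by rw [pow_succ', mul_assoc, hPd, ← mul_assoc, hPt, mul_assoc]⟩

theorem exists_t_pow_succ_mul_dt_pow_eq (h : WeylRelations K x dx t dt) (ν : ℕ) :
    ∃ Q ∈ diffOpXs K x dx t dt, t ^ (ν + 1) * dt ^ ν = Q * t := by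
  induction ν with
  | zero => exact ⟨1, one_mem _, by simp⟩
  | succ ν ih =>
    obtain ⟨Q, hQ, hQν⟩ := ih
    obtain ⟨P, hP, hPt⟩ := h.exists_t_mul_eq_mul_t
      (mul_mem hQ (sub_mem dt_mul_t_mem_diffOpXs (one_mem _)))
    refine ⟨P, hP, ?_⟩
    calc t ^ (ν + 1 + 1) * dt ^ (ν + 1) = t * (t ^ (ν + 1) * dt ^ ν) * dt := by
          rw [pow_succ' t (ν + 1), pow_succ dt]; simp only [mul_assoc]
      _ = t * (Q * (t * dt)) := by rw [hQν]; simp only [mul_assoc]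
      _ = P * t := by rw [← hPt, h.dt_mul_t, add_sub_cancel_right]

theorem exists_t_pow_mul_dt_pow_eq (h : WeylRelations K x dx t dt) (d ν : ℕ) :
    ∃ Q ∈ diffOpXs K x dx t dt, t ^ (d + (ν + 1)) * dt ^ ν = Q * t ^ (d + 1) := by
  obtain ⟨Q, hQ, hQν⟩ := h.exists_t_pow_succ_mul_dt_pow_eq ν
  obtain ⟨Q', hQ', hQd⟩ := h.exists_t_pow_mul_eq_mul_t_pow hQ d
  exact ⟨Q', hQ', by rw [pow_add, mul_assoc, hQν, ← mul_assoc, hQd, mul_assoc, ← pow_succ]⟩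

end WeylRelations

end Operators

section Action

variable {K N ι : Type*} [CommRing K] [AddCommGroup N] [Module K N]
  {x dx : ι → Module.End K N} {t dt φ : Module.End K N} {dφ : ι → Module.End K N} {v : N}

theorem pow_apply_eq_pow_apply_of_commute {a b : Module.End K N} (hab : Commute a b)
    (hv : a v = b v) (d : ℕ) : (a ^ d) v = (b ^ d) v := by
  induction d with
  | zero => rfl
  | succ d ih =>
    calc (a ^ (d + 1)) v = (a ^ d * b) v := by rw [pow_succ, Module.End.mul_apply, hv]; rfl
      _ = (b ^ (d + 1)) v := by
        rw [(hab.pow_left d).eq, Module.End.mul_apply, ih, pow_succ', Module.End.mul_apply]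

theorem apply_eq_zero_of_mem_malgrangeIdeal (ht : t v = φ v)
    (hdx : ∀ i, dx i v = -dφ i (dt v)) {w : Module.End K N}
    (hw : w ∈ malgrangeIdeal K x dx t dt φ dφ) : w v = 0 := by
  refine Submodule.span_le (p := LinearMap.ker (LinearMap.applyₗ v)) |>.2 ?_ hw
  rintro _ ⟨P, -, rfl | ⟨i, rfl⟩⟩
  · simp [ht]
  · simp [hdx]

namespace WeylRelations

theorem mem_malgrangeIdeal_of_apply_eq_zero (h : WeylRelations K x dx t dt)
    (hφ : φ ∈ Algebra.adjoin K (Set.range x)) (hdφ : ∀ i, dφ i ∈ Algebra.adjoin K (Set.range x))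
    (ht : t v = φ v) (hdx : ∀ i, dx i v = -dφ i (dt v))
    (hfree : ∀ w ∈ coeffOpDt K x dt, w v = 0 → w = 0) {P : Module.End K N}
    (hP : P ∈ diffOpY K x dx t dt) (hPv : P v = 0) : P ∈ malgrangeIdeal K x dx t dt φ dφ := by
  obtain ⟨u, hu, n, hn, rfl⟩ :=
    Submodule.mem_sup.1 (h.mem_malgrangeIdeal_sup_coeffOpDt hφ hdφ hP)
  have hnv : n v = 0 := by
    rwa [LinearMap.add_apply, apply_eq_zero_of_mem_malgrangeIdeal ht hdx hu, zero_add] at hPv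
  rwa [hfree n hn hnv, add_zero]

theorem t_pow_apply_t_apply (h : WeylRelations K x dx t dt)
    (hφ : φ ∈ Algebra.adjoin K (Set.range x)) (ht : t v = φ v) (d : ℕ) :
    (t ^ d) (t v) = (φ ^ d) (t v) := by
  have comm : Commute t φ := h.commute_t_of_mem_diffOpX (adjoin_range_le_diffOpX hφ)
  refine pow_apply_eq_pow_apply_of_commute comm ?_ d
  rw [ht, ← Module.End.mul_apply, comm.eq, Module.End.mul_apply, ht]

theorem exists_apply_t_apply_eq_of_mem_vFiltrationOne (h : WeylRelations K x dx t dt)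
    (hφ : φ ∈ Algebra.adjoin K (Set.range x)) (ht : t v = φ v) {w : Module.End K N}
    (hw : w ∈ vFiltrationOne K x dx t dt) : ∃ Q ∈ diffOpXs K x dx t dt, Q (t v) = w v := by
  have hφX : φ ∈ diffOpX K x dx := adjoin_range_le_diffOpX hφ
  induction hw using Submodule.span_induction with
  | zero => exact ⟨0, zero_mem _, rfl⟩
  | add w₁ w₂ _ _ h₁ h₂ =>
    obtain ⟨Q₁, hQ₁, e₁⟩ := h₁
    obtain ⟨Q₂, hQ₂, e₂⟩ := h₂
    exact ⟨Q₁ + Q₂, add_mem hQ₁ hQ₂, by simp only [LinearMap.add_apply, e₁, e₂]⟩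
  | smul c w _ hw =>
    obtain ⟨Q, hQ, e⟩ := hw
    exact ⟨c • Q, Subalgebra.smul_mem _ hQ c, by simp only [LinearMap.smul_apply, e]⟩
  | mem w hw =>
    obtain ⟨P, hP, μ, ν, hμν, rfl⟩ := hw
    obtain ⟨d, rfl⟩ : ∃ d, μ = d + (ν + 1) := ⟨μ - (ν + 1), by omega⟩
    obtain ⟨Q, hQ, hQd⟩ := h.exists_t_pow_mul_dt_pow_eq d ν
    refine ⟨P * Q * φ ^ d, mul_mem (mul_mem (diffOpX_le_diffOpXs hP) hQ)
      (pow_mem (diffOpX_le_diffOpXs hφX) d), ?_⟩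
    rw [mul_assoc P (t ^ _), hQd, pow_succ]
    simp only [Module.End.mul_apply, h.t_pow_apply_t_apply hφ ht]

theorem exists_apply_t_apply_eq_iff_mem (h : WeylRelations K x dx t dt)
    (hφ : φ ∈ Algebra.adjoin K (Set.range x)) (hdφ : ∀ i, dφ i ∈ Algebra.adjoin K (Set.range x))
    (ht : t v = φ v) (hdx : ∀ i, dx i v = -dφ i (dt v))
    (hfree : ∀ w ∈ coeffOpDt K x dt, w v = 0 → w = 0) {B : Module.End K N}
    (hB : B ∈ diffOpY K x dx t dt) :
    (∃ Q ∈ diffOpXs K x dx t dt, Q (t v) = B v) ↔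
      B ∈ malgrangeIdeal K x dx t dt φ dφ + vFiltrationOne K x dx t dt := by
  rw [Submodule.add_eq_sup]
  constructor
  · rintro ⟨Q, hQ, hQv⟩
    have hmem : B - Q * t ∈ diffOpY K x dx t dt :=
      sub_mem hB (mul_mem (diffOpXs_le_diffOpY hQ) t_mem_diffOpY)
    have hkill : (B - Q * t) v = 0 := by
      rw [LinearMap.sub_apply, Module.End.mul_apply, hQv, sub_self]
    rw [← sub_add_cancel B (Q * t)]
    exact Submodule.add_mem_sup
      (h.mem_malgrangeIdeal_of_apply_eq_zero hφ hdφ ht hdx hfree hmem hkill)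
      (h.mul_t_mem_vFiltrationOne hQ)
  · intro hmem
    obtain ⟨u, hu, w, hw, rfl⟩ := Submodule.mem_sup.1 hmem
    rw [LinearMap.add_apply, apply_eq_zero_of_mem_malgrangeIdeal ht hdx hu, zero_add]
    exact h.exists_apply_t_apply_eq_of_mem_vFiltrationOne hφ ht hw

end WeylRelations

end Action

theorem eq_zero_of_sum_C_mul_eq_zero {S : Type*} [Semiring S] {p : ℕ → S[X]}
    (hunit : ∀ k, IsUnit ((p k).coeff k)) (hdeg : ∀ k, (p k).natDegree ≤ k) {c : S[X]}
    (hsum : (c.sum fun k a => C a * p k) = 0) : c = 0 := by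
  have top_coeff : (c.sum fun k a => C a * p k).coeff c.natDegree
      = c.leadingCoeff * (p c.natDegree).coeff c.natDegree := by
    rw [sum_over_range _ (by simp), finsetSum_coeff, Finset.sum_range_succ, coeff_C_mul,
      Finset.sum_eq_zero, zero_add, leadingCoeff]
    intro k hk
    rw [coeff_C_mul, coeff_eq_zero_of_natDegree_lt ((hdeg k).trans_lt (Finset.mem_range.1 hk)),
      mul_zero]
  rw [hsum, coeff_zero] at top_coeff
  exact leadingCoeff_eq_zero.1 ((hunit _).mul_left_eq_zero.1 top_coeff.symm)

theorem descPochhammer_coeff_self (S : Type*) [Ring S] (k : ℕ) :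
    (descPochhammer S k).coeff k = 1 := by
  have monic := monic_descPochhammer ℤ k
  rw [Monic, leadingCoeff, descPochhammer_natDegree] at monic
  rw [← descPochhammer_map (Int.castRingHom S), coeff_map, monic, map_one]

theorem natDegree_descPochhammer_le (S : Type*) [Ring S] (k : ℕ) :
    (descPochhammer S k).natDegree ≤ k := by
  rw [← descPochhammer_map (Int.castRingHom S)]
  exact natDegree_map_le.trans (descPochhammer_natDegree ℤ k).le

/-- The derivation of `S[X]` that applies `D` to every coefficient. -/
noncomputable def coeffwise {K S : Type*} [CommRing K] [CommRing S] [Algebra K S]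
    (D : Derivation K S S) : Derivation K S[X] S[X] :=
  PolynomialModule.equivPolynomialSelf.compDer D.mapCoeffs

section Coeffwise

variable {K S : Type*} [CommRing K] [CommRing S] [Algebra K S] (D : Derivation K S S)

theorem coeffwise_monomial (k : ℕ) (a : S) : coeffwise D (monomial k a) = monomial k (D a) := by
  simp [coeffwise]

theorem coeffwise_C (a : S) : coeffwise D (C a) = C (D a) :=
  coeffwise_monomial D 0 a

theorem coeffwise_X : coeffwise D X = 0 := by
  simp [coeffwise]

end Coeffwise

section FPow

variable {K S : Type*} [CommRing K] [CommRing S] [Algebra K S]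

variable (K S) in
/-- Multiplication by the constants `a ∈ S` on `S[X]`.  Here and below `h ∈ S[X]` encodes the
element `h(s) f^s` of `N_f`, with `X` in the role of `s`. -/
noncomputable def mulC : S →ₐ[K] Module.End K S[X] :=
  (Algebra.lmul K S[X]).comp CAlgHom

variable (K) in
/-- The action of `t` on `N_f`, with `F` the image of `f`: `h(s) f^s ↦ h(s + 1) f · f^s`. -/
noncomputable def opT (F : S) : Module.End K S[X] :=
  mulC K S F * (aeval (X + 1 : S[X])).toLinearMap.restrictScalars K

variable (K) in
/-- The action of `∂ₜ` on `N_f`, with `g` the inverse of `f`: `h(s) f^s ↦ -s h(s - 1) f⁻¹ · f^s`. -/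
noncomputable def opDt (g : S) : Module.End K S[X] :=
  -(Algebra.lmul K S[X] (X * C g) * (aeval (X - 1 : S[X])).toLinearMap.restrictScalars K)

/-- The action on `N_f` of a derivation `D` in the `x` variables, with `g` the inverse of `F = f`;
the second summand comes from `D (f^s) = s (D f) f⁻¹ · f^s`. -/
noncomputable def opDx (D : Derivation K S S) (F g : S) : Module.End K S[X] :=
  (coeffwise D).toLinearMap + Algebra.lmul K S[X] (X * C (D F * g))

variable {D : Derivation K S S} {F g : S}

theorem mulC_apply (a : S) (h : S[X]) : mulC K S a h = C a * h := rfl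

theorem opT_apply (h : S[X]) : opT K F h = C F * aeval (X + 1 : S[X]) h := rfl

theorem opDt_apply (h : S[X]) : opDt K g h = -(X * C g * aeval (X - 1 : S[X]) h) := rfl

theorem opDx_apply (h : S[X]) :
    opDx D F g h = coeffwise D h + X * C (D F * g) * h := rfl

theorem eq_opDx_of_apply_C_mul_X_pow {T : Module.End K S[X]}
    (hT : ∀ (a : S) (m : ℕ),
      T (C a * X ^ m) = C (D a) * X ^ m + X * C (D F * g) * (C a * X ^ m)) : T = opDx D F g := by
  ext1 h
  induction h using Polynomial.induction_on' with
  | add p q hp hq => rw [map_add, map_add, hp, hq]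
  | monomial m a =>
    rw [opDx_apply, coeffwise_monomial, ← C_mul_X_pow_eq_monomial, hT, C_mul_X_pow_eq_monomial]

theorem coeffwise_aeval {q : S[X]} (hq : coeffwise D q = 0) (h : S[X]) :
    coeffwise D (aeval q h) = aeval q (coeffwise D h) := by
  induction h using Polynomial.induction_on' with
  | add h₁ h₂ ih₁ ih₂ => simp only [map_add, ih₁, ih₂]
  | monomial k a =>
    simp only [coeffwise_monomial, aeval_monomial, Derivation.leibniz, Derivation.leibniz_pow, hq,
      algebraMap_eq, coeffwise_C, smul_zero, mul_zero, zero_mul, add_zero, smul_eq_mul, mul_comm]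

theorem aeval_X_add_one_aeval_X_sub_one (h : S[X]) :
    aeval (X + 1 : S[X]) (aeval (X - 1 : S[X]) h) = h := by
  simp only [← comp_eq_aeval, comp_assoc, sub_comp, X_comp, one_comp, add_sub_cancel_right, comp_X]

theorem aeval_X_sub_one_aeval_X_add_one (h : S[X]) :
    aeval (X - 1 : S[X]) (aeval (X + 1 : S[X]) h) = h := by
  simp only [← comp_eq_aeval, comp_assoc, add_comp, X_comp, one_comp, sub_add_cancel, comp_X]

theorem neg_opDt_mul_opT (hFg : F * g = 1) :
    -(opDt K g * opT K F) = Algebra.lmul K S[X] X := by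
  ext1 h
  have hC : (C F * C g : S[X]) = 1 := by rw [← C_mul, hFg, C_1]
  simp only [LinearMap.neg_apply, Module.End.mul_apply, opT_apply, opDt_apply, map_mul, aeval_C,
    algebraMap_eq, aeval_X_sub_one_aeval_X_add_one, Algebra.coe_lmul_eq_mul, LinearMap.mul_apply']
  linear_combination X * h * hC

theorem opDt_mul_opT (hFg : F * g = 1) : opDt K g * opT K F = opT K F * opDt K g + 1 := by
  ext1 h
  have hC : (C F * C g : S[X]) = 1 := by rw [← C_mul, hFg, C_1]
  simp only [LinearMap.add_apply, Module.End.mul_apply, Module.End.one_apply, opT_apply,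
    opDt_apply, map_mul, map_neg, aeval_C, aeval_X, algebraMap_eq, aeval_X_sub_one_aeval_X_add_one,
    aeval_X_add_one_aeval_X_sub_one]
  linear_combination h * hC

theorem commute_opT_mulC (a : S) : Commute (opT K F) (mulC K S a) := by
  ext1 h
  simp only [Module.End.mul_apply, opT_apply, mulC_apply, map_mul, aeval_C, algebraMap_eq]
  ring

theorem commute_opDt_mulC (a : S) : Commute (opDt K g) (mulC K S a) := by
  ext1 h
  simp only [Module.End.mul_apply, opDt_apply, mulC_apply, map_mul, aeval_C, algebraMap_eq]
  ring

theorem lie_opDx_mulC (a : S) : ⁅opDx D F g, mulC K S a⁆ = mulC K S (D a) := by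
  ext1 h
  simp only [Ring.lie_def, LinearMap.sub_apply, Module.End.mul_apply, opDx_apply, mulC_apply,
    Derivation.leibniz, coeffwise_C, smul_eq_mul]
  ring

theorem commute_opT_opDx (hFg : F * g = 1) : Commute (opT K F) (opDx D F g) := by
  ext1 h
  have hC : (C F * C g : S[X]) = 1 := by rw [← C_mul, hFg, C_1]
  have hX : coeffwise D (X + 1 : S[X]) = 0 := by simp [coeffwise_X]
  simp only [Module.End.mul_apply, opT_apply, opDx_apply, map_mul, map_add, aeval_C, aeval_X,
    algebraMap_eq, Derivation.leibniz, coeffwise_C, coeffwise_aeval hX, smul_eq_mul]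
  linear_combination C (D F) * aeval (X + 1 : S[X]) h * hC

theorem commute_opDt_opDx (hFg : F * g = 1) : Commute (opDt K g) (opDx D F g) := by
  ext1 h
  have hX : coeffwise D (X - 1 : S[X]) = 0 := by simp [coeffwise_X]
  have hDg : D g = -(g * g * D F) := by
    have := congrArg D hFg
    rw [Derivation.leibniz, Derivation.map_one_eq_zero, smul_eq_mul, smul_eq_mul] at this
    linear_combination g * this - D g * hFg
  simp only [Module.End.mul_apply, opDt_apply, opDx_apply, map_mul, map_add, map_neg, aeval_C,
    aeval_X, algebraMap_eq, Derivation.leibniz, coeffwise_C, coeffwise_X, coeffwise_aeval hX,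
    smul_eq_mul, hDg]
  ring

theorem mulC_mem_adjoin_range {ι : Type*} {x : ι → S} {a : S}
    (ha : a ∈ Algebra.adjoin K (Set.range x)) :
    mulC K S a ∈ Algebra.adjoin K (Set.range fun i => mulC K S (x i)) := by
  rw [show (Set.range fun i => mulC K S (x i)) = mulC K S '' Set.range x from
    Set.range_comp (mulC K S) x, ← AlgHom.map_adjoin]
  exact ⟨a, ha, rfl⟩

theorem weylRelations_opDx {ι : Type*} {D : ι → Derivation K S S} (hFg : F * g = 1) {x : ι → S}
    (hx : ∀ i j, D i (x j) ∈ Algebra.adjoin K (Set.range x)) :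
    WeylRelations K (fun i => mulC K S (x i)) (fun i => opDx (D i) F g) (opT K F) (opDt K g) where
  dt_mul_t := opDt_mul_opT hFg
  commute_t_x i := commute_opT_mulC (x i)
  commute_dt_x i := commute_opDt_mulC (x i)
  commute_t_dx _ := commute_opT_opDx hFg
  commute_dt_dx _ := commute_opDt_opDx hFg
  lie_dx_x_mem i j := by
    rw [lie_opDx_mulC]
    exact mulC_mem_adjoin_range (hx i j)

theorem opDt_pow_apply_one (k : ℕ) :
    (opDt K g ^ k) 1 = C ((-g) ^ k) * descPochhammer S k := by
  induction k with
  | zero => simp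
  | succ k ih =>
    rw [pow_succ', Module.End.mul_apply, ih, opDt_apply, map_mul, aeval_C, ← comp_eq_aeval,
      descPochhammer_succ_left, algebraMap_eq, pow_succ, C_mul, C_neg]
    ring

theorem eq_zero_of_eval₂_opDt_apply_one_eq_zero (hg : IsUnit g) {c : S[X]}
    (hc : eval₂ (mulC K S : S →+* Module.End K S[X]) (opDt K g) c 1 = 0) : c = 0 := by
  have isUnit_coeff (k : ℕ) : IsUnit (((opDt K g ^ k) 1).coeff k) := by
    rw [opDt_pow_apply_one, coeff_C_mul, descPochhammer_coeff_self, mul_one]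
    exact hg.neg.pow k
  have natDegree_le (k : ℕ) : ((opDt K g ^ k) 1).natDegree ≤ k := by
    rw [opDt_pow_apply_one]
    exact (natDegree_C_mul_le _ _).trans (natDegree_descPochhammer_le S k)
  refine eq_zero_of_sum_C_mul_eq_zero isUnit_coeff natDegree_le ?_
  rwa [eval₂_eq_sum, Polynomial.sum, LinearMap.sum_apply] at hc

theorem exists_eq_eval₂_of_mem_coeffOpDt {ι : Type*} {x : ι → S} {w : Module.End K S[X]}
    (hw : w ∈ coeffOpDt K (fun i => mulC K S (x i)) (opDt K g)) :
    ∃ c : S[X], w = eval₂ (mulC K S : S →+* Module.End K S[X]) (opDt K g) c := by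
  induction hw using Algebra.adjoin_induction with
  | mem w hw =>
    rcases hw with ⟨i, rfl⟩ | rfl
    · exact ⟨C (x i), (eval₂_C _ _).symm⟩
    · exact ⟨X, (eval₂_X _ _).symm⟩
  | algebraMap a =>
    exact ⟨C (algebraMap K S a), ((eval₂_C _ _).trans ((mulC K S).commutes a)).symm⟩
  | add w₁ w₂ _ _ h₁ h₂ =>
    obtain ⟨c₁, rfl⟩ := h₁
    obtain ⟨c₂, rfl⟩ := h₂
    exact ⟨c₁ + c₂, (eval₂_add _ _).symm⟩
  | mul w₁ w₂ _ _ h₁ h₂ =>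
    obtain ⟨c₁, rfl⟩ := h₁
    obtain ⟨c₂, rfl⟩ := h₂
    exact ⟨c₁ * c₂, (eval₂_mul_noncomm _ _ fun k => (commute_opDt_mulC _).symm).symm⟩

theorem eval₂_lmul_X_apply_one (b : S[X]) :
    eval₂ (mulC K S : S →+* Module.End K S[X]) (Algebra.lmul K S[X] X) b 1 = b := by
  induction b using Polynomial.induction_on' with
  | add p q hp hq => rw [eval₂_add, LinearMap.add_apply, hp, hq]
  | monomial k a =>
    rw [eval₂_monomial, ← map_pow, Module.End.mul_apply]
    simp [mulC_apply, C_mul_X_pow_eq_monomial]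

theorem eq_zero_of_mem_coeffOpDt_of_apply_one_eq_zero {ι : Type*} {x : ι → S} (hg : IsUnit g)
    {w : Module.End K S[X]} (hw : w ∈ coeffOpDt K (fun i => mulC K S (x i)) (opDt K g))
    (hw1 : w 1 = 0) : w = 0 := by
  obtain ⟨c, rfl⟩ := exists_eq_eval₂_of_mem_coeffOpDt hw
  rw [eq_zero_of_eval₂_opDt_apply_one_eq_zero hg hw1, eval₂_zero]

theorem eval₂_mulC_mem {ι : Type*} {x : ι → S} {B : Subalgebra K (Module.End K S[X])}
    (hB : Algebra.adjoin K (Set.range fun i => mulC K S (x i)) ≤ B) {w : Module.End K S[X]}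
    (hw : w ∈ B) {b : S[X]} (hb : ∀ k, b.coeff k ∈ Algebra.adjoin K (Set.range x)) :
    eval₂ (mulC K S : S →+* Module.End K S[X]) w b ∈ B := by
  rw [eval₂_eq_sum]
  exact sum_mem fun k _ => mul_mem (hB (mulC_mem_adjoin_range (hb k))) (pow_mem hw k)

theorem exists_apply_C_eq_iff_mem {ι : Type*} {D : ι → Derivation K S S} {x : ι → S}
    {R : Subalgebra K S} (hR : Algebra.adjoin K (Set.range x) = R) (hFg : F * g = 1) (hF : F ∈ R)
    (hD : ∀ i, ∀ r ∈ R, D i r ∈ R) {b : S[X]} (hb : ∀ k, b.coeff k ∈ R) :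
    (∃ Q ∈ diffOpXs K (fun i => mulC K S (x i)) (fun i => opDx (D i) F g) (opT K F) (opDt K g),
      Q (C F) = b) ↔
    eval₂ (mulC K S : S →+* Module.End K S[X]) (-(opDt K g * opT K F)) b ∈
      malgrangeIdeal K (fun i => mulC K S (x i)) (fun i => opDx (D i) F g) (opT K F) (opDt K g)
        (mulC K S F) (fun i => mulC K S (D i F)) +
      vFiltrationOne K (fun i => mulC K S (x i)) (fun i => opDx (D i) F g) (opT K F)
        (opDt K g) := by
  subst hR
  have relations := weylRelations_opDx (D := D) hFg
    fun i j => hD i _ (Algebra.subset_adjoin ⟨j, rfl⟩)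
  have opT_one : opT K F 1 = C F := by rw [opT_apply, map_one, mul_one]
  have opDx_one (i : ι) : opDx (D i) F g 1 = -mulC K S (D i F) (opDt K g 1) := by
    simp only [opDx_apply, opDt_apply, mulC_apply, Derivation.map_one_eq_zero, map_one, C_mul]
    ring
  have free := fun w (hw : w ∈ coeffOpDt K (fun i => mulC K S (x i)) (opDt K g)) =>
    eq_zero_of_mem_coeffOpDt_of_apply_one_eq_zero (IsUnit.of_mul_eq_one_right F hFg) hw
  have symbol_mem := eval₂_mulC_mem
    (adjoin_range_le_diffOpX.trans
      (diffOpX_le_diffOpY (dx := fun i => opDx (D i) F g) (t := opT K F) (dt := opDt K g)))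
    (neg_mem (mul_mem dt_mem_diffOpY t_mem_diffOpY)) hb
  rw [← relations.exists_apply_t_apply_eq_iff_mem (v := 1) (mulC_mem_adjoin_range hF)
    (fun i => mulC_mem_adjoin_range (hD i F hF)) (by rw [opT_one, mulC_apply, mul_one]) opDx_one
    free symbol_mem, opT_one, neg_opDt_mul_opT hFg, eval₂_lmul_X_apply_one]

end FPow

section MvPolynomial

variable {K ι S : Type*} [CommRing K] [CommRing S] [Algebra (MvPolynomial ι K) S] [Algebra K S]
  [IsScalarTower K (MvPolynomial ι K) S]

variable (K ι S) in
theorem adjoin_range_algebraMap_X :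
    Algebra.adjoin K (Set.range fun i => algebraMap (MvPolynomial ι K) S (MvPolynomial.X i))
      = (IsScalarTower.toAlgHom K (MvPolynomial ι K) S).range := by
  rw [← Algebra.map_top, ← MvPolynomial.adjoin_range_X, AlgHom.map_adjoin, ← Set.range_comp]
  rfl

theorem BSxs_general (f : MvPolynomial ι K) {g : S}
    (hg : algebraMap (MvPolynomial ι K) S f * g = 1)
    (D : ι → Derivation K S S)
    (hD : ∀ i (r : MvPolynomial ι K),
      D i (algebraMap (MvPolynomial ι K) S r)
        = algebraMap (MvPolynomial ι K) S (MvPolynomial.pderiv i r))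
    (t : Module.End K S[X])
    (ht : ∀ h, t h = C (algebraMap (MvPolynomial ι K) S f) * aeval (X + 1) h)
    (dt : Module.End K S[X])
    (hdt : ∀ h, dt h = -(X * C g * aeval (X - 1) h))
    (xOp : ι → Module.End K S[X])
    (hx : ∀ i h, xOp i h = C (algebraMap (MvPolynomial ι K) S (MvPolynomial.X i)) * h)
    (dx : ι → Module.End K S[X])
    (hdx : ∀ i (a : S) (m : ℕ), dx i (C a * X ^ m)
      = C (D i a) * X ^ m
        + X * C (algebraMap (MvPolynomial ι K) S (MvPolynomial.pderiv i f) * g) * (C a * X ^ m))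
    (mulX : MvPolynomial ι K →+* Module.End K S[X])
    (hmulX : ∀ r h, mulX r h = C (algebraMap (MvPolynomial ι K) S r) * h)
    (b : (MvPolynomial ι K)[X]) :
    (∃ Q ∈ diffOpXs K xOp dx t dt, Q (C (algebraMap (MvPolynomial ι K) S f))
        = b.map (algebraMap (MvPolynomial ι K) S)) ↔
      eval₂ mulX (-(dt * t)) b ∈
        malgrangeIdeal K xOp dx t dt (mulX f) (fun i => mulX (MvPolynomial.pderiv i f))
          + vFiltrationOne K xOp dx t dt := by
  obtain rfl : t = opT K (algebraMap _ S f) := LinearMap.ext ht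
  obtain rfl : dt = opDt K g := LinearMap.ext hdt
  obtain rfl : xOp = fun i => mulC K S (algebraMap _ S (MvPolynomial.X i)) :=
    funext fun i => LinearMap.ext (hx i)
  obtain rfl : dx = fun i => opDx (D i) (algebraMap _ S f) g := by
    ext1 i
    exact eq_opDx_of_apply_C_mul_X_pow fun a m => by rw [hdx, hD]
  obtain rfl : mulX = (mulC K S : S →+* Module.End K S[X]).comp (algebraMap _ S) :=
    RingHom.ext fun r => LinearMap.ext (hmulX r)
  have stable : ∀ i, ∀ r ∈ (IsScalarTower.toAlgHom K (MvPolynomial ι K) S).range,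
      D i r ∈ (IsScalarTower.toAlgHom K (MvPolynomial ι K) S).range := by
    rintro i _ ⟨r, rfl⟩
    exact ⟨MvPolynomial.pderiv i r, (hD i r).symm⟩
  have coeff_mem (k : ℕ) : (b.map (algebraMap _ S)).coeff k
      ∈ (IsScalarTower.toAlgHom K (MvPolynomial ι K) S).range :=
    ⟨b.coeff k, (coeff_map _ k).symm⟩
  rw [exists_apply_C_eq_iff_mem (adjoin_range_algebraMap_X K ι S) hg ⟨f, rfl⟩ stable coeff_mem,
    eval₂_map]
  simp only [hD]
  rfl

end MvPolynomial

theorem BSxs (K : Type*) [Field K] [CharZero K] (n : ℕ)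
    (f : MvPolynomial (Fin n) K) (hf : f ≠ 0)
    (S : Type*) [CommRing S] [Algebra (MvPolynomial (Fin n) K) S] [Algebra K S]
    [IsScalarTower K (MvPolynomial (Fin n) K) S]
    [IsLocalization.Away f S]
    (D : Fin n → Derivation K S S)
    (hD : ∀ i (r : MvPolynomial (Fin n) K),
      D i (algebraMap (MvPolynomial (Fin n) K) S r)
        = algebraMap (MvPolynomial (Fin n) K) S (MvPolynomial.pderiv i r))
    (t : Module.End K (Polynomial S))
    (ht : ∀ h : Polynomial S,
      t h = Polynomial.C (algebraMap (MvPolynomial (Fin n) K) S f) *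
        (Polynomial.aeval (Polynomial.X + 1) h))
    (dt : Module.End K (Polynomial S))
    (hdt : ∀ h : Polynomial S,
      dt h = -(Polynomial.X * Polynomial.C (IsLocalization.Away.invSelf (S := S) f) *
        (Polynomial.aeval (Polynomial.X - 1) h)))
    (xOp : Fin n → Module.End K (Polynomial S))
    (hx : ∀ i (h : Polynomial S),
      xOp i h = Polynomial.C (algebraMap (MvPolynomial (Fin n) K) S (MvPolynomial.X i)) * h)
    (dx : Fin n → Module.End K (Polynomial S))
    (hdx : ∀ i (a : S) (m : ℕ),
      dx i (Polynomial.C a * Polynomial.X ^ m)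
        = Polynomial.C (D i a) * Polynomial.X ^ m
          + Polynomial.X *
            Polynomial.C (algebraMap (MvPolynomial (Fin n) K) S (MvPolynomial.pderiv i f) *
              IsLocalization.Away.invSelf (S := S) f) *
            (Polynomial.C a * Polynomial.X ^ m))
    -- multiplication (in End) by a polynomial in K[x], as a ring hom
    (mulX : MvPolynomial (Fin n) K →+* Module.End K (Polynomial S))
    (hmulX : ∀ (r : MvPolynomial (Fin n) K) (h : Polynomial S),
      mulX r h = Polynomial.C (algebraMap (MvPolynomial (Fin n) K) S r) * h)
    (b : Polynomial (MvPolynomial (Fin n) K)) (hb : b ≠ 0) :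
    -- ∃ Q ∈ D_X[s], Q f^{s+1} = b(x,s) fˢ
    (∃ Q ∈ Algebra.adjoin K
        ({P | ∃ i : Fin n, P = xOp i ∨ P = dx i} ∪ {-(dt * t)}),
      Q (Polynomial.C (algebraMap (MvPolynomial (Fin n) K) S f))
        = b.map (algebraMap (MvPolynomial (Fin n) K) S))
    ↔
    -- b(x,σ) ∈ I_f + V¹ D_Y
    (Polynomial.eval₂ mulX (-(dt * t)) b) ∈
      (Submodule.span K
        {w : Module.End K (Polynomial S) | ∃ P ∈ Algebra.adjoin K
            ({P | ∃ i : Fin n, P = xOp i ∨ P = dx i} ∪ {t, dt}),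
          w = P * (t - mulX f) ∨
          ∃ i : Fin n, w = P * (dx i + mulX (MvPolynomial.pderiv i f) * dt)}
      + Submodule.span K
        {w : Module.End K (Polynomial S) | ∃ P ∈ Algebra.adjoin K
            {P | ∃ i : Fin n, P = xOp i ∨ P = dx i},
          ∃ μ ν : ℕ, (μ : ℤ) - (ν : ℤ) ≥ 1 ∧ w = P * t ^ μ * dt ^ ν}) :=
  BSxs_general f (IsLocalization.Away.mul_invSelf f) D hD t ht dt hdt xOp hx dx hdx mulX hmulX b
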